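/- For the cycle C_n on [n], the vertex cover ideal J(C_n) satisfies: if n = 3k then projdim J(C_n) = k, reg J(C_n) = 2k and β_{k,3k}(J(C_{3k})) = 2; if n = 3k+1 then projdim = k, reg = 2k+1 and β_{k,3k+1}(J(C_{3k+1})) = 1; if n = 3k+2 then projdim = k+1, reg = 2k+1 and β_{k+1,3k+2}(J(C_{3k+2})) = 1. -/

import Mathlib

/-!
Write `Ind(W)` for the independence complex of the subgraph of the cycle induced on `W`. The link
of a face `F` of `Ind(C_n)` is `Ind(W)` with `W` the complement of the closed neighbourhood of
`F`, so every Betti number is a sum of dimensions of homology of such complexes.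

Two facts compute them. If `W` has an isolated vertex, `Ind(W)` is a cone and is acyclic
(`hdim_isolated`). For a vertex `v` there is the long exact sequence relating `Ind(W)`, the
deletion `Ind(W \ v)` and the link `Ind(W \ N[v])`, whose connecting map is the inclusion of the
link into the deletion; where this map is zero on homology, dimensions add
(`DelLink.hdim_succ`). Both are proved with the signed operators `ι_v` (insert `v`) and `δ_v`
(remove `v`), which satisfy `∂ ι_v + ι_v ∂ = 1` and `∂ δ_v + δ_v ∂ = 0`. If `v` is the neighbour of
a leaf, the deletion has an isolated vertex, and the homology of `Ind(W)` is that of the link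
shifted by one (`hdim_leaf`).

Peeling leaves gives the homology of paths, with period three (`hdim_arc`), and one more use of
the sequence gives that of the cycle: it lives at the single level `⌊(n + 1) / 3⌋`, with dimension
`2` if `3 ∣ n` and `1` otherwise (`hdim_cycle`). This is the contribution of `F = ∅`. For `F ≠ ∅` the
set `W` is proper, and peeling leaves shows that homology of `Ind(W)` at level `i` forces
`|W| ≤ 3i ≤ n` (`proper_bound`); as `|W| ≥ n - 3|F|`, the contribution of `F` to the projective
dimension is at most `n / 3` and to the regularity at most `2n / 3`, so neither exceeds that of
`F = ∅`.
-/

open Finset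

attribute [local instance] Classical.propDecidable

variable (K : Type) [Field K]

/-- Quotient of the submodule `A` by (the pullback of) the submodule `B`. -/
noncomputable def quotMod {M : Type} [AddCommGroup M] [Module K M] (A B : Submodule K M) :
    Type :=
  ↥A ⧸ Submodule.comap A.subtype B

noncomputable instance {M : Type} [AddCommGroup M] [Module K M] (A B : Submodule K M) :
    AddCommGroup (quotMod K A B) :=
  inferInstanceAs (AddCommGroup (↥A ⧸ Submodule.comap A.subtype B))

noncomputable instance {M : Type} [AddCommGroup M] [Module K M] (A B : Submodule K M) :
    Module K (quotMod K A B) :=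
  inferInstanceAs (Module K (↥A ⧸ Submodule.comap A.subtype B))

variable {n : ℕ}

/-- The simplicial boundary operator on the total chain module spanned by all
subsets of `Fin n` (the empty set accounting for the augmentation). -/
noncomputable def bdry : ((Finset (Fin n)) →₀ K) →ₗ[K] ((Finset (Fin n)) →₀ K) :=
  Finsupp.lsum K fun s => LinearMap.toSpanSingleton K _
    (∑ v ∈ s, ((-1 : K) ^ (s.filter (· < v)).card) • Finsupp.single (s.erase v) (1 : K))

/-- The subspace of chains of the complex `Δ` spanned by faces of cardinality `c`. -/
noncomputable def degSub (Δ : Finset (Finset (Fin n))) (c : ℕ) :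
    Submodule K ((Finset (Fin n)) →₀ K) :=
  Submodule.span K {x | ∃ s ∈ Δ, s.card = c ∧ x = Finsupp.single s (1 : K)}

/-- Reduced homology of `Δ` at chain level `c`, that is, `H̃_{c-1}(Δ; K)`:
cycles supported in faces of cardinality `c` modulo boundaries of chains
supported in faces of cardinality `c + 1`. -/
noncomputable def homologyLevel (Δ : Finset (Finset (Fin n))) (c : ℕ) : Type :=
  quotMod K (degSub K Δ c ⊓ LinearMap.ker (bdry K))
    (Submodule.map (bdry K) (degSub K Δ (c + 1)))

noncomputable instance (Δ : Finset (Finset (Fin n))) (c : ℕ) :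
    AddCommGroup (homologyLevel K Δ c) :=
  inferInstanceAs (AddCommGroup (quotMod K _ _))

noncomputable instance (Δ : Finset (Finset (Fin n))) (c : ℕ) :
    Module K (homologyLevel K Δ c) :=
  inferInstanceAs (Module K (quotMod K _ _))

/-- The `i`-th reduced simplicial homology `H̃_i(Δ; K)`. -/
noncomputable def reducedHomology (Δ : Finset (Finset (Fin n))) (i : ℕ) : Type :=
  homologyLevel K Δ (i + 1)

noncomputable instance (Δ : Finset (Finset (Fin n))) (i : ℕ) :
    AddCommGroup (reducedHomology K Δ i) :=
  inferInstanceAs (AddCommGroup (homologyLevel K Δ (i + 1)))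

noncomputable instance (Δ : Finset (Finset (Fin n))) (i : ℕ) :
    Module K (reducedHomology K Δ i) :=
  inferInstanceAs (Module K (homologyLevel K Δ (i + 1)))

/-- The independence complex of `G`, i.e. the clique complex of `Gᶜ`. -/
noncomputable def indepCx (G : SimpleGraph (Fin n)) : Finset (Finset (Fin n)) :=
  Finset.univ.powerset.filter fun s => ∀ i ∈ s, ∀ j ∈ s, ¬ G.Adj i j

/-- The link of a face `F` in the complex `Δ`. -/
noncomputable def linkCx (Δ : Finset (Finset (Fin n))) (F : Finset (Fin n)) :
    Finset (Finset (Fin n)) :=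
  Finset.univ.powerset.filter fun s => Disjoint s F ∧ s ∪ F ∈ Δ

/-- The graded Betti number `β_{i,d}` of the vertex cover ideal `J(G)`, expressed via
Hochster's formula: `β_{i,d}(J(G)) = Σ_{F ∈ Δ(Gᶜ), |F| = n - d} dim H̃_{i-1}(link F)`. -/
noncomputable def coverBetti (G : SimpleGraph (Fin n)) (i d : ℕ) : ℕ :=
  ∑ F ∈ (indepCx G).filter (fun F => F.card + d = n),
    Module.finrank K (homologyLevel K (linkCx (indepCx G) F) i)

/-- The projective dimension of the vertex cover ideal `J(G)`. -/
noncomputable def projdimJ (G : SimpleGraph (Fin n)) : ℕ :=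
  sSup {i | ∃ d, coverBetti K G i d ≠ 0}

/-- The Castelnuovo–Mumford regularity of the vertex cover ideal `J(G)`. -/
noncomputable def regJ (G : SimpleGraph (Fin n)) : ℕ :=
  sSup {j | ∃ i, coverBetti K G i (i + j) ≠ 0}

open SimpleGraph

/-! ### Contraction and insertion operators on chains -/

section Operators

/-- The sign with which the vertex `v` enters the boundary of a face containing `v`. -/
noncomputable def sgn (v : Fin n) (s : Finset (Fin n)) : K :=
  (-1 : K) ^ (s.filter (· < v)).card

/-- Signed removal of the vertex `v` from a face (zero on faces avoiding `v`). -/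
noncomputable def contr (v : Fin n) :
    ((Finset (Fin n)) →₀ K) →ₗ[K] ((Finset (Fin n)) →₀ K) :=
  Finsupp.lsum K fun s => LinearMap.toSpanSingleton K _
    (if v ∈ s then sgn K v s • Finsupp.single (s.erase v) (1 : K) else 0)

/-- Signed insertion of the vertex `v` into a face (zero on faces containing `v`). -/
noncomputable def ins (v : Fin n) :
    ((Finset (Fin n)) →₀ K) →ₗ[K] ((Finset (Fin n)) →₀ K) :=
  Finsupp.lsum K fun s => LinearMap.toSpanSingleton K _
    (if v ∈ s then 0 else sgn K v s • Finsupp.single (insert v s) (1 : K))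

theorem contr_single (v : Fin n) (s : Finset (Fin n)) (c : K) :
    contr K v (Finsupp.single s c) =
      if v ∈ s then Finsupp.single (s.erase v) (c * sgn K v s) else 0 := by
  simp only [contr, Finsupp.lsum_single, LinearMap.toSpanSingleton_apply]
  split_ifs <;> simp

theorem ins_single (v : Fin n) (s : Finset (Fin n)) (c : K) :
    ins K v (Finsupp.single s c) =
      if v ∈ s then 0 else Finsupp.single (insert v s) (c * sgn K v s) := by
  simp only [ins, Finsupp.lsum_single, LinearMap.toSpanSingleton_apply]
  split_ifs <;> simp

theorem bdry_single (s : Finset (Fin n)) :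
    bdry K (Finsupp.single s 1) =
      ∑ v ∈ s, Finsupp.single (s.erase v) (sgn K v s) := by
  simp [bdry, sgn]

theorem chain_map_ext {f g : ((Finset (Fin n)) →₀ K) →ₗ[K] ((Finset (Fin n)) →₀ K)}
    (h : ∀ s, f (Finsupp.single s 1) = g (Finsupp.single s 1)) : f = g := by
  refine Finsupp.lhom_ext fun s b => ?_
  have : Finsupp.single s b = b • Finsupp.single s (1 : K) := by simp
  rw [this, map_smul, map_smul, h]

theorem bdry_eq_sum : bdry K = ∑ v : Fin n, contr K v := by
  refine chain_map_ext K fun s => ?_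
  simp [bdry_single, LinearMap.sum_apply, contr_single, Finset.sum_ite_mem]

theorem sgn_mul_self (v : Fin n) (s : Finset (Fin n)) : sgn K v s * sgn K v s = 1 := by
  rw [sgn, ← mul_pow]; simp

theorem sgn_insert (v : Fin n) {w : Fin n} {s : Finset (Fin n)} (h : w ∉ s) :
    sgn K v (insert w s) = if w < v then - sgn K v s else sgn K v s := by
  unfold sgn
  rw [Finset.filter_insert]
  split_ifs
  · rw [Finset.card_insert_of_notMem (by simp [h]), pow_succ]; ring
  · rfl

theorem sgn_erase (v : Fin n) {w : Fin n} {s : Finset (Fin n)} (h : w ∈ s) :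
    sgn K v (s.erase w) = if w < v then - sgn K v s else sgn K v s := by
  have := sgn_insert K v (Finset.notMem_erase w s)
  rw [Finset.insert_erase h] at this
  rw [this]; split_ifs <;> simp

theorem contr_contr (v w : Fin n) (x : (Finset (Fin n)) →₀ K) :
    contr K v (contr K w x) + contr K w (contr K v x) = 0 := by
  suffices contr K v ∘ₗ contr K w + contr K w ∘ₗ contr K v = 0 from
    LinearMap.congr_fun this x
  refine chain_map_ext K fun s => ?_
  simp only [LinearMap.add_apply, LinearMap.comp_apply, LinearMap.zero_apply, contr_single]
  rcases lt_trichotomy v w with h | h | h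
  · by_cases hv : v ∈ s <;> by_cases hw : w ∈ s <;>
      simp [hv, hw, contr_single, h.ne, h.ne', sgn_erase, h, h.not_gt,
        Finset.erase_right_comm (a := v) (b := w), mul_comm]
  · subst h
    by_cases hv : v ∈ s <;> simp [hv, contr_single]
  · by_cases hv : v ∈ s <;> by_cases hw : w ∈ s <;>
      simp [hv, hw, contr_single, h.ne, h.ne', sgn_erase, h, h.not_gt,
        Finset.erase_right_comm (a := v) (b := w), mul_comm]

/-- The anticommutation relations `δ_w ι_v + ι_v δ_w = [w = v]` of contractions and insertions. -/
theorem contr_ins (v w : Fin n) (x : (Finset (Fin n)) →₀ K) :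
    contr K w (ins K v x) + ins K v (contr K w x) = if w = v then x else 0 := by
  suffices contr K w ∘ₗ ins K v + ins K v ∘ₗ contr K w =
      if w = v then LinearMap.id else 0 by
    have := LinearMap.congr_fun this x
    split_ifs at this ⊢ <;> simpa using this
  refine chain_map_ext K fun s => ?_
  simp only [LinearMap.add_apply, LinearMap.comp_apply, contr_single, ins_single]
  by_cases h : w = v
  · subst h
    by_cases hv : w ∈ s <;>
      simp [hv, contr_single, ins_single, sgn_erase, sgn_insert, sgn_mul_self]
  · have h' : v ≠ w := fun e => h e.symm
    rcases lt_or_gt_of_ne h with hl | hl <;>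
    by_cases hv : v ∈ s <;> by_cases hw : w ∈ s <;>
      simp [hv, hw, contr_single, ins_single, sgn_erase, sgn_insert, h, h', hl, hl.not_gt,
        Finset.erase_insert_of_ne h', mul_comm]

/-- Insertion of `v` is a homotopy contracting the augmented complex of all subsets; on a
subcomplex it relates chains of the link of `v` to chains containing `v`. -/
theorem bdry_ins (v : Fin n) (x : (Finset (Fin n)) →₀ K) :
    bdry K (ins K v x) + ins K v (bdry K x) = x := by
  simp only [bdry_eq_sum, LinearMap.sum_apply, map_sum, ← Finset.sum_add_distrib, contr_ins]
  simp

theorem bdry_contr (v : Fin n) (x : (Finset (Fin n)) →₀ K) :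
    bdry K (contr K v x) = - contr K v (bdry K x) := by
  rw [eq_neg_iff_add_eq_zero]
  simp only [bdry_eq_sum, LinearMap.sum_apply, map_sum, ← Finset.sum_add_distrib, contr_contr]
  simp

/-- `∂² = 0`: by the homotopy identity `∂ ι_v + ι_v ∂ = 1` the operator `∂²` commutes with
every insertion `ι_v`, and every face is obtained from the empty one by insertions. -/
theorem bdry_bdry (x : (Finset (Fin n)) →₀ K) : bdry K (bdry K x) = 0 := by
  have comm : ∀ v (y : (Finset (Fin n)) →₀ K),
      bdry K (bdry K (ins K v y)) = ins K v (bdry K (bdry K y)) := by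
    intro v y
    have h1 := congrArg (bdry K) (bdry_ins K v y)
    have h2 := bdry_ins K v (bdry K y)
    rw [map_add] at h1
    have h3 := h1.trans h2.symm
    rw [add_comm] at h3
    exact add_left_cancel h3
  suffices bdry K ∘ₗ bdry K = 0 from LinearMap.congr_fun this x
  refine chain_map_ext K fun s => ?_
  simp only [LinearMap.comp_apply, LinearMap.zero_apply]
  induction s using Finset.induction_on with
  | empty => simp [bdry_single]
  | insert v s hv ih =>
    have : Finsupp.single (insert v s) (1 : K) =
        sgn K v s • ins K v (Finsupp.single s 1) := by
      rw [ins_single, if_neg hv, Finsupp.smul_single, one_mul, smul_eq_mul, sgn_mul_self]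
    rw [this, map_smul, map_smul, comm, ih, map_zero, smul_zero]

theorem single_mem_degSub {Δ : Finset (Finset (Fin n))} {s : Finset (Fin n)} (h : s ∈ Δ)
    {c : ℕ} (hc : s.card = c) : Finsupp.single s (1 : K) ∈ degSub K Δ c :=
  Submodule.subset_span ⟨s, h, hc, rfl⟩

theorem map_mem_degSub {Δ Δ' : Finset (Finset (Fin n))} {c c' : ℕ}
    (f : ((Finset (Fin n)) →₀ K) →ₗ[K] ((Finset (Fin n)) →₀ K))
    (h : ∀ s ∈ Δ, s.card = c → f (Finsupp.single s 1) ∈ degSub K Δ' c')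
    {x : (Finset (Fin n)) →₀ K} (hx : x ∈ degSub K Δ c) : f x ∈ degSub K Δ' c' := by
  have : degSub K Δ c ≤ (degSub K Δ' c').comap f := by
    rw [degSub, Submodule.span_le]
    rintro _ ⟨s, h1, h2, rfl⟩
    exact h s h1 h2
  exact this hx

theorem degSub_mono {Δ Δ' : Finset (Finset (Fin n))} (h : Δ ⊆ Δ') (c : ℕ) :
    degSub K Δ c ≤ degSub K Δ' c := by
  refine Submodule.span_mono ?_
  rintro _ ⟨s, h1, h2, rfl⟩
  exact ⟨s, h h1, h2, rfl⟩

end Operators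

/-! ### The deletion–link exact sequence -/

section DeletionLink

/-- The cycles of `Δ` supported in faces of cardinality `c`. -/
noncomputable def cyc (Δ : Finset (Finset (Fin n))) (c : ℕ) :
    Submodule K ((Finset (Fin n)) →₀ K) :=
  degSub K Δ c ⊓ LinearMap.ker (bdry K)

/-- The boundaries of `Δ` supported in faces of cardinality `c`. -/
noncomputable def bnd (Δ : Finset (Finset (Fin n))) (c : ℕ) :
    Submodule K ((Finset (Fin n)) →₀ K) :=
  Submodule.map (bdry K) (degSub K Δ (c + 1))

/-- The dimension of the homology of `Δ` at chain level `c`, that is, of `H̃_{c-1}(Δ; K)`. -/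
noncomputable def hdim (Δ : Finset (Finset (Fin n))) (c : ℕ) : ℕ :=
  Module.finrank K (homologyLevel K Δ c)

/-- A family of finite sets closed under passing to subsets. -/
def DownClosed (Δ : Finset (Finset (Fin n))) : Prop :=
  ∀ s ∈ Δ, ∀ t ⊆ s, t ∈ Δ

variable {K}

theorem mem_cyc {Δ : Finset (Finset (Fin n))} {c : ℕ} {x : (Finset (Fin n)) →₀ K} :
    x ∈ cyc K Δ c ↔ x ∈ degSub K Δ c ∧ bdry K x = 0 := by
  simp [cyc]

theorem mem_bnd {Δ : Finset (Finset (Fin n))} {c : ℕ} {x : (Finset (Fin n)) →₀ K} :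
    x ∈ bnd K Δ c ↔ ∃ y ∈ degSub K Δ (c + 1), bdry K y = x := by
  simp [bnd]

theorem bdry_mem {Δ : Finset (Finset (Fin n))} (hΔ : DownClosed Δ) {c : ℕ}
    {x : (Finset (Fin n)) →₀ K} (hx : x ∈ degSub K Δ (c + 1)) :
    bdry K x ∈ degSub K Δ c := by
  refine map_mem_degSub K _ (fun s hs hc => ?_) hx
  rw [bdry_single]
  refine Submodule.sum_mem _ fun v hv => ?_
  rw [← mul_one (sgn K v s), ← smul_eq_mul, ← Finsupp.smul_single]
  refine Submodule.smul_mem _ _ (single_mem_degSub K (hΔ s hs _ (Finset.erase_subset _ _)) ?_)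
  rw [Finset.card_erase_of_mem hv, hc]; rfl

theorem bnd_le_cyc {Δ : Finset (Finset (Fin n))} (hΔ : DownClosed Δ) (c : ℕ) :
    bnd K Δ c ≤ cyc K Δ c := by
  intro x hx
  obtain ⟨y, hy, rfl⟩ := mem_bnd.1 hx
  exact mem_cyc.2 ⟨bdry_mem hΔ hy, bdry_bdry K y⟩

theorem finrank_quotMod_add {M : Type} [AddCommGroup M] [Module K M] [FiniteDimensional K M]
    {A B : Submodule K M} (h : B ≤ A) :
    Module.finrank K (quotMod K A B) + Module.finrank K B = Module.finrank K A := by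
  have h1 := Submodule.finrank_quotient_add_finrank (B.comap A.subtype)
  rw [(Submodule.comapSubtypeEquivOfLe h).finrank_eq] at h1
  exact h1

theorem hdim_add {Δ : Finset (Finset (Fin n))} (hΔ : DownClosed Δ) (c : ℕ) :
    hdim K Δ c + Module.finrank K (bnd K Δ c) = Module.finrank K (cyc K Δ c) :=
  finrank_quotMod_add (bnd_le_cyc hΔ c)

theorem hdim_eq_zero_iff {Δ : Finset (Finset (Fin n))} (hΔ : DownClosed Δ) (c : ℕ) :
    hdim K Δ c = 0 ↔ cyc K Δ c ≤ bnd K Δ c := by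
  have h := hdim_add (K := K) hΔ c
  constructor
  · intro h0
    rw [h0, zero_add] at h
    exact (Submodule.eq_of_le_of_finrank_eq (bnd_le_cyc hΔ c) h).ge
  · intro hle
    have := Submodule.finrank_mono hle
    omega

theorem finrank_map_add_ker {M : Type} [AddCommGroup M] [Module K M] [FiniteDimensional K M]
    (f : M →ₗ[K] M) (A : Submodule K M) :
    Module.finrank K (A.map f) + Module.finrank K (A ⊓ LinearMap.ker f : Submodule K M) =
      Module.finrank K A := by
  have h := LinearMap.finrank_range_add_finrank_ker (f.domRestrict A)
  rw [LinearMap.range_domRestrict, LinearMap.ker_domRestrict] at h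
  rw [← h, ← (Submodule.equivMapOfInjective A.subtype A.subtype_injective _).finrank_eq.symm,
    Submodule.map_comap_subtype]

/-- `D` and `L` are the deletion and the link of the vertex `v` in the complex `Δ`. -/
structure DelLink (Δ D L : Finset (Finset (Fin n))) (v : Fin n) : Prop where
  down : DownClosed Δ
  downD : DownClosed D
  downL : DownClosed L
  mem_del : ∀ s, s ∈ D ↔ s ∈ Δ ∧ v ∉ s
  mem_link : ∀ s, s ∈ L ↔ v ∉ s ∧ insert v s ∈ Δ

namespace DelLink

variable {Δ D L : Finset (Finset (Fin n))} {v : Fin n}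

theorem del_sub (h : DelLink Δ D L v) : D ⊆ Δ := fun s hs => ((h.mem_del s).1 hs).1

theorem link_sub (h : DelLink Δ D L v) : L ⊆ D := fun s hs =>
  (h.mem_del s).2 ⟨h.down _ ((h.mem_link s).1 hs).2 _ (Finset.subset_insert _ _),
    ((h.mem_link s).1 hs).1⟩

theorem contr_del (h : DelLink Δ D L v) {c : ℕ} {x : (Finset (Fin n)) →₀ K}
    (hx : x ∈ degSub K D c) : contr K v x = 0 := by
  have : degSub K D c ≤ LinearMap.ker (contr K v) := by
    rw [degSub, Submodule.span_le]
    rintro _ ⟨s, h1, h2, rfl⟩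
    simp [contr_single, ((h.mem_del s).1 h1).2]
  exact this hx

theorem contr_mem (h : DelLink Δ D L v) {c : ℕ} {x : (Finset (Fin n)) →₀ K}
    (hx : x ∈ degSub K Δ (c + 1)) : contr K v x ∈ degSub K L c := by
  refine map_mem_degSub K _ (fun s hs hc => ?_) hx
  rw [contr_single]
  split_ifs with hv
  · rw [one_mul, ← mul_one (sgn K v s), ← smul_eq_mul, ← Finsupp.smul_single]
    refine Submodule.smul_mem _ _ (single_mem_degSub K ?_ ?_)
    · rw [h.mem_link, Finset.insert_erase hv]; exact ⟨Finset.notMem_erase _ _, hs⟩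
    · rw [Finset.card_erase_of_mem hv, hc]; rfl
  · exact Submodule.zero_mem _

theorem ins_mem (h : DelLink Δ D L v) {c : ℕ} {x : (Finset (Fin n)) →₀ K}
    (hx : x ∈ degSub K L c) : ins K v x ∈ degSub K Δ (c + 1) := by
  refine map_mem_degSub K _ (fun s hs hc => ?_) hx
  rw [ins_single]
  split_ifs with hv
  · exact Submodule.zero_mem _
  · rw [one_mul, ← mul_one (sgn K v s), ← smul_eq_mul, ← Finsupp.smul_single]
    refine Submodule.smul_mem _ _ (single_mem_degSub K ((h.mem_link s).1 hs).2 ?_)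
    rw [Finset.card_insert_of_notMem hv, hc]

theorem contr_ins_mem (h : DelLink Δ D L v) {c : ℕ} {x : (Finset (Fin n)) →₀ K}
    (hx : x ∈ degSub K Δ c) : contr K v (ins K v x) ∈ degSub K D c := by
  refine map_mem_degSub K (contr K v ∘ₗ ins K v) (fun s hs hc => ?_) hx
  rw [LinearMap.comp_apply, ins_single]
  split_ifs with hv
  · simp
  · have : contr K v (Finsupp.single (insert v s) (1 * sgn K v s)) = Finsupp.single s 1 := by
      simp [contr_single, hv, sgn_insert, sgn_mul_self]
    rw [this]
    exact single_mem_degSub K ((h.mem_del s).2 ⟨hs, hv⟩) hc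

/-- A chain is the sum of its part avoiding `v` and its part containing `v`. -/
theorem split (x : (Finset (Fin n)) →₀ K) :
    contr K v (ins K v x) + ins K v (contr K v x) = x := by
  simpa using contr_ins K v v x

theorem mem_del_of_contr (h : DelLink Δ D L v) {c : ℕ} {x : (Finset (Fin n)) →₀ K}
    (hx : x ∈ degSub K Δ c) (h0 : contr K v x = 0) : x ∈ degSub K D c := by
  have := split (v := v) x
  rw [h0, map_zero, add_zero] at this
  rw [← this]; exact h.contr_ins_mem hx

theorem contr_ins_link (h : DelLink Δ D L v) {c : ℕ} {x : (Finset (Fin n)) →₀ K}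
    (hx : x ∈ degSub K L c) : contr K v (ins K v x) = x := by
  have := split (v := v) x
  rwa [h.contr_del (degSub_mono K h.link_sub c hx), map_zero, add_zero] at this

/-- Suppose the inclusion of the link of `v` into its deletion, which is the connecting map, induces
zero in homology at the levels `c` and `c + 1`. Then the deletion–link sequence splits into a short exact sequence at
level `c + 1`. The map `H(Δ) → H(link)` is induced by contraction with `v`. -/
theorem hdim_succ (h : DelLink Δ D L v) (c : ℕ) (h0 : cyc K L c ≤ bnd K D c)
    (h1 : cyc K L (c + 1) ≤ bnd K D (c + 1)) :
    hdim K Δ (c + 1) = hdim K D (c + 1) + hdim K L c := by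
  have mapZ : (cyc K Δ (c + 1)).map (contr K v) = cyc K L c := by
    ext b
    rw [Submodule.mem_map]
    constructor
    · rintro ⟨z, hz, rfl⟩
      obtain ⟨hz1, hz2⟩ := mem_cyc.1 hz
      exact mem_cyc.2 ⟨h.contr_mem hz1, by rw [bdry_contr, hz2, map_zero, neg_zero]⟩
    · intro hb
      obtain ⟨a, ha, hab⟩ := mem_bnd.1 (h0 hb)
      obtain ⟨hb1, hb2⟩ := mem_cyc.1 hb
      -- Since `∂(ι_v b) = b = ∂a`, the chain `ι_v b - a` is a cycle lifting `b`.
      refine ⟨ins K v b - a, mem_cyc.2 ⟨?_, ?_⟩, ?_⟩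
      · exact Submodule.sub_mem _ (h.ins_mem hb1) (degSub_mono K h.del_sub _ ha)
      · have := bdry_ins K v b
        rw [hb2, map_zero, add_zero] at this
        rw [map_sub, this, hab, sub_self]
      · rw [map_sub, h.contr_ins_link hb1, h.contr_del ha, sub_zero]
  have mapB : (bnd K Δ (c + 1)).map (contr K v) = bnd K L c := by
    ext b
    rw [Submodule.mem_map]
    constructor
    · rintro ⟨z, hz, rfl⟩
      obtain ⟨y, hy, rfl⟩ := mem_bnd.1 hz
      refine mem_bnd.2 ⟨- contr K v y, Submodule.neg_mem _ (h.contr_mem hy), ?_⟩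
      rw [map_neg, bdry_contr, neg_neg]
    · intro hb
      obtain ⟨y, hy, rfl⟩ := mem_bnd.1 hb
      refine ⟨bdry K (- ins K v y), mem_bnd.2 ⟨_, Submodule.neg_mem _ (h.ins_mem hy), rfl⟩, ?_⟩
      rw [map_neg, map_neg, ← bdry_contr, h.contr_ins_link hy]
  have kerZ : cyc K Δ (c + 1) ⊓ LinearMap.ker (contr K v) = cyc K D (c + 1) := by
    ext z
    rw [Submodule.mem_inf, mem_cyc, mem_cyc, LinearMap.mem_ker]
    constructor
    · rintro ⟨⟨hz, hz'⟩, h2⟩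
      exact ⟨h.mem_del_of_contr hz h2, hz'⟩
    · rintro ⟨hz, hz'⟩
      exact ⟨⟨degSub_mono K h.del_sub _ hz, hz'⟩, h.contr_del hz⟩
  have kerB : bnd K Δ (c + 1) ⊓ LinearMap.ker (contr K v) = bnd K D (c + 1) := by
    ext z
    rw [Submodule.mem_inf, LinearMap.mem_ker]
    constructor
    · rintro ⟨hz, h2⟩
      obtain ⟨x, hx, rfl⟩ := mem_bnd.1 hz
      -- With `b = δ_v x` a cycle of the link, `∂x = ∂(δ_v ι_v x) + b`, and `b` bounds in `D`.
      have hb : contr K v x ∈ cyc K L (c + 1) :=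
        mem_cyc.2 ⟨h.contr_mem hx, by rw [bdry_contr, h2, neg_zero]⟩
      obtain ⟨a, ha, hab⟩ := mem_bnd.1 (h1 hb)
      refine mem_bnd.2 ⟨contr K v (ins K v x) + a,
        Submodule.add_mem _ (h.contr_ins_mem hx) ha, ?_⟩
      have h3 := bdry_ins K v (contr K v x)
      rw [(mem_cyc.1 hb).2, map_zero, add_zero] at h3
      conv_rhs => rw [← split (v := v) x]
      rw [map_add, map_add, h3, hab]
    · intro hz
      obtain ⟨a, ha, rfl⟩ := mem_bnd.1 hz
      refine ⟨mem_bnd.2 ⟨a, degSub_mono K h.del_sub _ ha, rfl⟩, ?_⟩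
      rw [← neg_eq_zero, ← bdry_contr, h.contr_del ha, map_zero]
  have e1 := finrank_map_add_ker (contr K v) (cyc K Δ (c + 1))
  have e2 := finrank_map_add_ker (contr K v) (bnd K Δ (c + 1))
  rw [mapZ, kerZ] at e1
  rw [mapB, kerB] at e2
  have e3 := hdim_add (K := K) h.down (c + 1)
  have e4 := hdim_add (K := K) h.downD (c + 1)
  have e5 := hdim_add (K := K) h.downL c
  omega

/-- The connecting map vanishes wherever its source or its target does. -/
theorem cyc_le_of_hdim (h : DelLink Δ D L v) {c : ℕ}
    (h0 : hdim K L c = 0 ∨ hdim K D c = 0) : cyc K L c ≤ bnd K D c := by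
  rcases h0 with h0 | h0
  · exact ((hdim_eq_zero_iff h.downL c).1 h0).trans
      (Submodule.map_mono (degSub_mono K h.link_sub _))
  · refine le_trans ?_ ((hdim_eq_zero_iff h.downD c).1 h0)
    exact inf_le_inf_right _ (degSub_mono K h.link_sub _)

end DelLink

/-- A cone is acyclic: if the vertex `v` can be added to every face, then insertion of `v` is
a contracting homotopy. -/
theorem hdim_cone {Δ : Finset (Finset (Fin n))} (hΔ : DownClosed Δ) (v : Fin n)
    (hv : ∀ s ∈ Δ, insert v s ∈ Δ) (c : ℕ) : hdim K Δ c = 0 := by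
  rw [hdim_eq_zero_iff hΔ]
  intro z hz
  obtain ⟨hz1, hz2⟩ := mem_cyc.1 hz
  refine mem_bnd.2 ⟨ins K v z, map_mem_degSub K _ (fun s hs hc => ?_) hz1, ?_⟩
  · rw [ins_single]
    split_ifs with h
    · exact Submodule.zero_mem _
    · rw [one_mul, ← mul_one (sgn K v s), ← smul_eq_mul, ← Finsupp.smul_single]
      refine Submodule.smul_mem _ _ (single_mem_degSub K (hv s hs) ?_)
      rw [Finset.card_insert_of_notMem h, hc]
  · simpa [hz2] using bdry_ins K v z

/-- A complex with a vertex has no reduced homology in degree `-1`. -/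
theorem hdim_zero_of_vertex {Δ : Finset (Finset (Fin n))} (hΔ : DownClosed Δ) {v : Fin n}
    (hv : {v} ∈ Δ) : hdim K Δ 0 = 0 := by
  rw [hdim_eq_zero_iff hΔ]
  intro z hz
  obtain ⟨hz1, hz2⟩ := mem_cyc.1 hz
  refine mem_bnd.2 ⟨ins K v z, map_mem_degSub K _ (fun s hs hc => ?_) hz1, ?_⟩
  · rw [Finset.card_eq_zero] at hc
    subst hc
    rw [ins_single, if_neg (Finset.notMem_empty v), one_mul]
    simpa [sgn] using single_mem_degSub K hv (Finset.card_singleton v)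
  · simpa [hz2] using bdry_ins K v z

/-- The complex `{∅}` has homology only in degree `-1`, of dimension one. -/
theorem hdim_empty (c : ℕ) :
    hdim K ({∅} : Finset (Finset (Fin n))) c = if c = 0 then 1 else 0 := by
  have hΔ : DownClosed ({∅} : Finset (Finset (Fin n))) := by
    intro s hs t ht
    rw [Finset.mem_singleton] at hs ⊢
    subst hs
    exact Finset.subset_empty.1 ht
  have h0 : ∀ c, degSub K ({∅} : Finset (Finset (Fin n))) (c + 1) = ⊥ := by
    intro c
    rw [degSub, Submodule.span_eq_bot]
    rintro _ ⟨s, h1, h2, rfl⟩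
    rw [Finset.mem_singleton] at h1
    subst h1
    simp at h2
  have h := hdim_add (K := K) hΔ c
  rw [bnd, h0, Submodule.map_bot, finrank_bot, add_zero] at h
  rw [h]
  rcases c with _ | c
  · have : cyc K ({∅} : Finset (Finset (Fin n))) 0 =
        Submodule.span K {Finsupp.single ∅ (1 : K)} := by
      have e : degSub K ({∅} : Finset (Finset (Fin n))) 0 =
          Submodule.span K {Finsupp.single ∅ (1 : K)} := by
        rw [degSub]; congr 1; ext x; simp
      rw [cyc, e, inf_eq_left, Submodule.span_le]
      simp [bdry_single]
    rw [this, finrank_span_singleton (by simp)]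
    rfl
  · rw [cyc, h0, bot_inf_eq, finrank_bot]; simp

end DeletionLink

/-! ### Independence complexes of induced subgraphs -/

section Independence

/-- The independence complex of the subgraph of `G` induced on `W`. -/
noncomputable def indOn (G : SimpleGraph (Fin n)) (W : Finset (Fin n)) :
    Finset (Finset (Fin n)) :=
  (indepCx G).filter (· ⊆ W)

variable {K} {G : SimpleGraph (Fin n)} {W : Finset (Fin n)}

theorem mem_indepCx {s : Finset (Fin n)} :
    s ∈ indepCx G ↔ ∀ i ∈ s, ∀ j ∈ s, ¬ G.Adj i j := by
  simp [indepCx]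

theorem mem_indOn {s : Finset (Fin n)} :
    s ∈ indOn G W ↔ (∀ i ∈ s, ∀ j ∈ s, ¬ G.Adj i j) ∧ s ⊆ W := by
  rw [indOn, Finset.mem_filter, mem_indepCx]

theorem downClosed_indOn : DownClosed (indOn G W) := by
  intro s hs t ht
  rw [mem_indOn] at hs ⊢
  exact ⟨fun i hi j hj => hs.1 i (ht hi) j (ht hj), ht.trans hs.2⟩

theorem indOn_empty : indOn G ∅ = {∅} := by
  ext s
  rw [mem_indOn, Finset.subset_empty, Finset.mem_singleton]
  constructor
  · exact fun h => h.2
  · rintro rfl; simp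

theorem singleton_mem_indOn {v : Fin n} (hv : v ∈ W) : {v} ∈ indOn G W := by
  rw [mem_indOn]; simp [hv]

/-- The vertices of `W` outside the closed neighbourhood of `v`. -/
noncomputable def awayFrom (G : SimpleGraph (Fin n)) (W : Finset (Fin n)) (v : Fin n) :
    Finset (Fin n) :=
  W.filter fun w => w ≠ v ∧ ¬ G.Adj v w

theorem mem_awayFrom {v w : Fin n} : w ∈ awayFrom G W v ↔ w ∈ W ∧ w ≠ v ∧ ¬ G.Adj v w := by
  simp [awayFrom]

/-- The complement of the closed neighbourhood of the set `F` of vertices. -/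
noncomputable def outside (G : SimpleGraph (Fin n)) (F : Finset (Fin n)) : Finset (Fin n) :=
  Finset.univ.filter fun w => w ∉ F ∧ ∀ f ∈ F, ¬ G.Adj f w

theorem mem_outside {F : Finset (Fin n)} {w : Fin n} :
    w ∈ outside G F ↔ w ∉ F ∧ ∀ f ∈ F, ¬ G.Adj f w := by
  simp [outside]

theorem delLink_indOn {v : Fin n} (hv : v ∈ W) :
    DelLink (indOn G W) (indOn G (W.erase v)) (indOn G (awayFrom G W v)) v where
  down := downClosed_indOn
  downD := downClosed_indOn
  downL := downClosed_indOn
  mem_del s := by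
    rw [mem_indOn, mem_indOn, Finset.subset_erase, and_assoc]
  mem_link s := by
    rw [mem_indOn, mem_indOn]
    constructor
    · rintro ⟨h1, h2⟩
      have h3 : ∀ w ∈ s, w ∈ W ∧ w ≠ v ∧ ¬ G.Adj v w := fun w hw =>
        Finset.mem_filter.1 (h2 hw)
      refine ⟨fun h => (h3 v h).2.1 rfl, ?_, ?_⟩
      · intro i hi j hj
        rcases Finset.mem_insert.1 hi with hi | hi <;>
          rcases Finset.mem_insert.1 hj with hj | hj
        · rw [hi, hj]; exact G.irrefl
        · rw [hi]; exact (h3 j hj).2.2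
        · rw [hj]; exact fun h => (h3 i hi).2.2 h.symm
        · exact h1 i hi j hj
      · exact Finset.insert_subset hv fun w hw => (h3 w hw).1
    · rintro ⟨h1, h2, h3⟩
      refine ⟨fun i hi j hj => h2 i (Finset.mem_insert_of_mem hi) j (Finset.mem_insert_of_mem hj),
        fun w hw => Finset.mem_filter.2 ⟨h3 (Finset.mem_insert_of_mem hw), ?_, ?_⟩⟩
      · rintro rfl; exact h1 hw
      · exact h2 v (Finset.mem_insert_self _ _) w (Finset.mem_insert_of_mem hw)

theorem hdim_isolated {u : Fin n} (hu : u ∈ W) (h : ∀ w ∈ W, ¬ G.Adj u w) (c : ℕ) :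
    hdim K (indOn G W) c = 0 := by
  refine hdim_cone downClosed_indOn u (fun s hs => ?_) c
  rw [mem_indOn] at hs ⊢
  refine ⟨?_, Finset.insert_subset hu hs.2⟩
  intro i hi j hj
  rcases Finset.mem_insert.1 hi with hi | hi <;> rcases Finset.mem_insert.1 hj with hj | hj
  · rw [hi, hj]; exact G.irrefl
  · rw [hi]; exact h j (hs.2 hj)
  · rw [hj]; exact fun e => h i (hs.2 hi) e.symm
  · exact hs.1 i hi j hj

/-- If `u` is a leaf of the graph induced on `W`, with neighbour `v`, then deleting `v` isolates
`u`, so the independence complex has the homology of the suspension of the link of `v`. -/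
theorem hdim_leaf {u v : Fin n} (hu : u ∈ W) (hv : v ∈ W) (huv : u ≠ v)
    (h : ∀ w ∈ W, G.Adj u w → w = v) (c : ℕ) :
    hdim K (indOn G W) (c + 1) = hdim K (indOn G (awayFrom G W v)) c := by
  have hd : ∀ c, hdim K (indOn G (W.erase v)) c = 0 :=
    hdim_isolated (Finset.mem_erase.2 ⟨huv, hu⟩) fun w hw e =>
      (Finset.mem_erase.1 hw).1 (h w (Finset.mem_erase.1 hw).2 e)
  have hl := delLink_indOn (G := G) hv
  rw [hl.hdim_succ c (hl.cyc_le_of_hdim (.inr (hd _))) (hl.cyc_le_of_hdim (.inr (hd _))), hd,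
    zero_add]

/-- The link of an independent set `F` is the independence complex of the graph induced on the
complement of the closed neighbourhood of `F`. -/
theorem linkCx_indepCx {F : Finset (Fin n)} (hF : F ∈ indepCx G) :
    linkCx (indepCx G) F =
      indOn G (outside G F) := by
  rw [mem_indepCx] at hF
  ext s
  rw [linkCx, Finset.mem_filter, mem_indOn, mem_indepCx, Finset.disjoint_left]
  simp only [Finset.powerset_univ, Finset.mem_univ, true_and, Finset.mem_union]
  constructor
  · rintro ⟨h1, h2⟩
    refine ⟨fun i hi j hj => h2 i (.inl hi) j (.inl hj), fun w hw => ?_⟩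
    rw [mem_outside]
    exact ⟨h1 hw, fun f hf => h2 f (.inr hf) w (.inl hw)⟩
  · rintro ⟨h1, h2⟩
    have h3 : ∀ w ∈ s, w ∉ F ∧ ∀ f ∈ F, ¬ G.Adj f w := fun w hw =>
      mem_outside.1 (h2 hw)
    refine ⟨fun w hw => (h3 w hw).1, ?_⟩
    rintro i (hi | hi) j (hj | hj)
    · exact h1 i hi j hj
    · exact fun e => (h3 i hi).2 j hj e.symm
    · exact (h3 j hj).2 i hi
    · exact hF i hi j hj

end Independence

/-! ### Proper induced subgraphs of a cycle -/

section Proper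

variable {K} {N : ℕ}

theorem cycle_adj_succ {u v : Fin (N + 3)} :
    (cycleGraph (N + 3)).Adj u v ↔ v = u + 1 ∨ u = v + 1 := by
  rw [cycleGraph_adj, sub_eq_iff_eq_add, sub_eq_iff_eq_add, add_comm 1 v, add_comm 1 u, or_comm]

theorem succ_ne (v : Fin (N + 3)) : v + 1 ≠ v := by
  simp

theorem succ_succ_ne (v : Fin (N + 3)) : v + 1 + 1 ≠ v := by
  rw [add_assoc, Ne, add_eq_left]
  exact ne_of_beq_false rfl

/-- A nonempty proper set of vertices of the cycle contains the last vertex of an arc. -/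
theorem exists_arc_end {W : Finset (Fin (N + 3))} (h0 : W.Nonempty) (h1 : W ≠ Finset.univ) :
    ∃ u ∈ W, u + 1 ∉ W := by
  by_contra! hc
  obtain ⟨w, hw⟩ := h0
  refine h1 (Finset.eq_univ_iff_forall.2 fun x => ?_)
  have key : ∀ y : Fin (N + 3), w + y ∈ W := by
    intro y
    induction y using Fin.induction with
    | zero => simpa using hw
    | succ i ih => rw [← Fin.coeSucc_eq_succ, ← add_assoc]; exact hc _ ih
  have := key (x - w)
  rwa [add_sub_cancel] at this

theorem awayFrom_sub {W : Finset (Fin (N + 3))} {v : Fin (N + 3)} :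
    W ⊆ awayFrom (cycleGraph (N + 3)) W v ∪ {v, v + 1, v - 1} := by
  intro w hw
  simp only [mem_awayFrom, Finset.mem_union, Finset.mem_insert,
    Finset.mem_singleton, cycle_adj_succ, eq_sub_iff_add_eq]
  by_cases a : w = v
  · simp [a]
  by_cases b : w = v + 1
  · simp [b]
  by_cases d : w + 1 = v
  · simp [d]
  · exact .inl ⟨hw, a, by rintro (e | e); exacts [b e, d e.symm]⟩

/-- On a proper subset `W` of the cycle, homology at level `c` forces
`|W| ≤ 3c ≤ |W ∪ (W + 1)|`. The last vertex `v + 1` of an arc of `W` is isolated or a leaf with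
neighbour `v`; in the second case, removing the closed neighbourhood of `v` lowers the level by
one, removes at most three vertices from `W` and at least three from `W ∪ (W + 1)`. -/
theorem proper_bound (W : Finset (Fin (N + 3))) (hW : W ≠ Finset.univ) (c : ℕ)
    (h : hdim K (indOn (cycleGraph (N + 3)) W) c ≠ 0) :
    W.card ≤ 3 * c ∧ 3 * c ≤ (W ∪ W.image (· + 1)).card := by
  induction hm : W.card using Nat.strong_induction_on generalizing W c with
  | _ m ih =>
  subst hm
  rcases W.eq_empty_or_nonempty with rfl | hne
  · rw [indOn_empty, hdim_empty] at h
    have : c = 0 := by by_contra h0; simp [h0] at h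
    subst this; simp
  obtain ⟨u, hu, hu1⟩ := exists_arc_end hne hW
  -- Either `u` is isolated in `W`, or it is a leaf with neighbour `v = u - 1`.
  by_cases hv : u - 1 ∈ W
  swap
  · refine absurd (hdim_isolated hu (fun w hw e => ?_) c) h
    rw [cycle_adj_succ] at e
    rcases e with rfl | rfl
    · exact hu1 hw
    · exact hv (by simpa using hw)
  obtain ⟨v, rfl⟩ : ∃ v, u = v + 1 := ⟨u - 1, by simp⟩
  rw [add_sub_cancel_right] at hv
  rcases c with _ | c
  · exact absurd (hdim_zero_of_vertex downClosed_indOn (singleton_mem_indOn hv)) h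
  rw [hdim_leaf hu hv (succ_ne v) (fun w hw e => by
    rw [cycle_adj_succ] at e
    rcases e with rfl | e
    · exact absurd hw hu1
    · exact (add_right_cancel e).symm)] at h
  set W' := awayFrom (cycleGraph (N + 3)) W v with hW'
  have hsub : W' ⊆ W := fun w hw => (mem_awayFrom.1 hw).1
  have hvW' : v ∉ W' := by simp [hW', mem_awayFrom]
  have hv1W' : v + 1 ∉ W' := by simp [hW', mem_awayFrom, cycle_adj_succ]
  have hvm : v - 1 ∉ W' := by simp [hW', mem_awayFrom, cycle_adj_succ]
  have hlt : W'.card < W.card := Finset.card_lt_card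
    (Finset.ssubset_iff_subset_ne.2 ⟨hsub, fun e => hvW' (e ▸ hv)⟩)
  obtain ⟨i1, i2⟩ := ih _ hlt W' (fun e => hvW' (e ▸ Finset.mem_univ _)) c h rfl
  constructor
  · have : W.card ≤ W'.card + _ := (Finset.card_le_card (awayFrom_sub (W := W) (v := v))).trans
      (Finset.card_union_le _ _)
    have h3 := Finset.card_le_three (a := v) (b := v + 1) (c := v - 1)
    omega
  · have hdisj : Disjoint (W' ∪ W'.image (· + 1)) {v, v + 1, v + 1 + 1} := by
      rw [Finset.disjoint_right]
      intro x hx hx'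
      simp only [Finset.mem_insert, Finset.mem_singleton] at hx
      simp only [Finset.mem_union, Finset.mem_image] at hx'
      rcases hx with rfl | rfl | rfl <;> rcases hx' with hx' | ⟨y, hy, hy'⟩
      · exact hvW' hx'
      · exact hvm (by rwa [← hy', add_sub_cancel_right])
      · exact hv1W' hx'
      · exact hvW' (by rwa [← add_right_cancel hy'])
      · exact hu1 (hsub hx')
      · exact hv1W' (by rwa [← add_right_cancel hy'])
    have hle : (W' ∪ W'.image (· + 1)) ∪ {v, v + 1, v + 1 + 1} ⊆ W ∪ W.image (· + 1) := by
      refine Finset.union_subset (Finset.union_subset_union hsub (Finset.image_subset_image hsub))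
        ?_
      intro x hx
      simp only [Finset.mem_insert, Finset.mem_singleton] at hx
      rcases hx with rfl | rfl | rfl
      · exact Finset.mem_union_left _ hv
      · exact Finset.mem_union_left _ hu
      · exact Finset.mem_union_right _ (Finset.mem_image_of_mem _ hu)
    have hc := Finset.card_le_card hle
    rw [Finset.card_union_of_disjoint hdisj, Finset.card_eq_three.2 ⟨v, v + 1, v + 1 + 1,
      (succ_ne v).symm, (succ_succ_ne v).symm, (succ_ne _).symm, rfl⟩] at hc
    omega

end Proper

/-! ### Arcs and the whole cycle -/

section Arcs

variable {K}

theorem cycle_adj_val (hn : 3 ≤ n) {u v : Fin n} :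
    (cycleGraph n).Adj u v ↔ u.val + 1 = v.val ∨ v.val + 1 = u.val ∨
      (u.val = 0 ∧ v.val + 1 = n) ∨ (v.val = 0 ∧ u.val + 1 = n) := by
  have hu := u.isLt
  have hv := v.isLt
  rw [cycleGraph_adj']
  rcases lt_trichotomy u v with h | rfl | h
  · rw [Fin.coe_sub_iff_lt.2 h, Fin.sub_val_of_le h.le]
    rw [Fin.lt_def] at h
    omega
  · rw [Fin.sub_val_of_le le_rfl]; omega
  · rw [Fin.coe_sub_iff_lt.2 h, Fin.sub_val_of_le h.le]
    rw [Fin.lt_def] at h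
    omega

/-- The arc of `m` consecutive vertices of `Fin n` starting at `a`. -/
noncomputable def arc (n a m : ℕ) : Finset (Fin n) :=
  Finset.univ.filter fun i => a ≤ i.val ∧ i.val < a + m

theorem mem_arc {a m : ℕ} {i : Fin n} : i ∈ arc n a m ↔ a ≤ i.val ∧ i.val < a + m := by
  simp [arc]

/-- The homology of the independence complex of a path on `m` vertices: it is that of a
sphere if `m ≢ 1 mod 3` and zero otherwise. Only arcs missing a vertex of the cycle (`m < n`)
are induced paths. -/
theorem hdim_arc (hn : 3 ≤ n) (a m : ℕ) (ham : a + m ≤ n) (hm : m < n) (c : ℕ) :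
    hdim K (indOn (cycleGraph n) (arc n a m)) c =
      if (m % 3 = 0 ∧ c = m / 3) ∨ (m % 3 = 2 ∧ c = m / 3 + 1) then 1 else 0 := by
  have vertex : ∀ {m}, 0 < m → a + m ≤ n →
      hdim K (indOn (cycleGraph n) (arc n a m)) 0 = 0 := fun {m} h0 h1 =>
    hdim_zero_of_vertex downClosed_indOn (singleton_mem_indOn (v := ⟨a, by omega⟩)
      (mem_arc.2 ⟨le_rfl, by simpa using h0⟩))
  have arc_zero : arc n a 0 = ∅ := by
    ext i; simp [mem_arc]
  induction m using Nat.strong_induction_on generalizing c with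
  | _ m ih =>
  match m with
  | 0 =>
    rw [arc_zero, indOn_empty, hdim_empty]
    simp
  | 1 =>
    have ha : a < n := by omega
    have h : ∀ w ∈ arc n a 1, ¬ (cycleGraph n).Adj ⟨a, ha⟩ w := by
      intro w hw
      rw [mem_arc] at hw
      rw [cycle_adj_val hn]
      dsimp only
      omega
    have hmem : (⟨a, ha⟩ : Fin n) ∈ arc n a 1 := mem_arc.2 ⟨le_rfl, by simp⟩
    rw [hdim_isolated hmem h]
    simp
  | 2 =>
    rcases c with _ | c
    · rw [vertex (by omega) ham]; simp
    rw [hdim_leaf (u := ⟨a + 1, by omega⟩) (v := ⟨a, by omega⟩)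
      (mem_arc.2 ⟨by simp, by simp⟩) (mem_arc.2 ⟨by simp, by simp⟩) (by simp)]
    · have : awayFrom (cycleGraph n) (arc n a 2) ⟨a, by omega⟩ = ∅ := by
        ext i
        simp only [mem_awayFrom, mem_arc, cycle_adj_val hn, Ne, Fin.ext_iff,
          Finset.notMem_empty, iff_false]
        omega
      rw [this, indOn_empty, hdim_empty]
      simp
    · intro w hw
      rw [mem_arc] at hw
      rw [cycle_adj_val hn, Fin.ext_iff]
      dsimp only
      omega
  | m + 3 =>
    rcases c with _ | c
    · rw [vertex (by omega) ham, if_neg (by omega)]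
    rw [hdim_leaf (u := ⟨a + m + 2, by omega⟩) (v := ⟨a + m + 1, by omega⟩)
      (mem_arc.2 ⟨by dsimp only; omega, by dsimp only; omega⟩)
      (mem_arc.2 ⟨by dsimp only; omega, by dsimp only; omega⟩) (by simp)]
    · have : awayFrom (cycleGraph n) (arc n a (m + 3)) ⟨a + m + 1, by omega⟩ = arc n a m := by
        ext i
        simp only [mem_awayFrom, mem_arc, cycle_adj_val hn, Ne, Fin.ext_iff]
        omega
      rw [this, ih m (by omega) (by omega) (by omega)]
      congr 1
      rw [eq_iff_iff]
      omega
    · intro w hw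
      rw [mem_arc] at hw
      rw [cycle_adj_val hn, Fin.ext_iff]
      dsimp only
      omega

/-- The homology of the independence complex of the cycle, from the deletion–link sequence at the
last vertex; its connecting map vanishes because the arcs left by deleting a vertex,
or its closed neighbourhood, are never both non-acyclic at the same level. -/
theorem hdim_cycle (hn : 3 ≤ n) (c : ℕ) :
    hdim K (indOn (cycleGraph n) Finset.univ) c =
      if c = (n + 1) / 3 then (if n % 3 = 0 then 2 else 1) else 0 := by
  rcases c with _ | c
  · rw [hdim_zero_of_vertex downClosed_indOn
      (singleton_mem_indOn (Finset.mem_univ (⟨0, by omega⟩ : Fin n))), if_neg (by omega)]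
  have hl := delLink_indOn (G := cycleGraph n) (Finset.mem_univ (⟨n - 1, by omega⟩ : Fin n))
  have e1 : (Finset.univ : Finset (Fin n)).erase ⟨n - 1, by omega⟩ = arc n 0 (n - 1) := by
    ext i
    have := i.isLt
    simp only [Finset.mem_erase, Finset.mem_univ, and_true, mem_arc, Ne, Fin.ext_iff]
    omega
  have e2 : awayFrom (cycleGraph n) Finset.univ ⟨n - 1, by omega⟩ = arc n 1 (n - 3) := by
    ext i
    have := i.isLt
    simp only [mem_awayFrom, Finset.mem_univ, true_and, mem_arc,
      cycle_adj_val hn, Ne, Fin.ext_iff]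
    omega
  rw [e1, e2] at hl
  have key : ∀ c, hdim K (indOn (cycleGraph n) (arc n 1 (n - 3))) c = 0 ∨
      hdim K (indOn (cycleGraph n) (arc n 0 (n - 1))) c = 0 := by
    intro c
    rw [hdim_arc hn _ _ (by omega) (by omega), hdim_arc hn _ _ (by omega) (by omega)]
    split_ifs <;> omega
  rw [hl.hdim_succ c (hl.cyc_le_of_hdim (key _)) (hl.cyc_le_of_hdim (key _)),
    hdim_arc hn _ _ (by omega) (by omega), hdim_arc hn _ _ (by omega) (by omega)]
  split_ifs <;> omega

end Arcs

/-! ### Betti numbers -/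

section Betti

/-- The nonvanishing Betti numbers: the face `∅` contributes only in the top bidegree, and the
links of the other faces satisfy the bounds for proper subsets of the cycle. -/
theorem coverBetti_ne_zero (hn : 3 ≤ n) {i d : ℕ} (h : coverBetti K (cycleGraph n) i d ≠ 0) :
    (i = (n + 1) / 3 ∧ d = n) ∨ (3 * i ≤ n ∧ 3 * d ≤ 3 * i + 2 * n) := by
  obtain ⟨N, rfl⟩ : ∃ N, n = N + 3 := ⟨n - 3, by omega⟩
  obtain ⟨F, hF, hF0⟩ := Finset.exists_ne_zero_of_sum_ne_zero h
  rw [Finset.mem_filter] at hF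
  obtain ⟨hF, hd⟩ := hF
  rw [linkCx_indepCx hF] at hF0
  set W := outside (cycleGraph (N + 3)) F with hW
  change hdim K (indOn _ W) i ≠ 0 at hF0
  rcases F.eq_empty_or_nonempty with rfl | ⟨f, hf⟩
  · left
    have : W = Finset.univ := by simp [hW, outside]
    rw [this, hdim_cycle hn] at hF0
    refine ⟨?_, by simpa using hd⟩
    by_contra h0
    simp [h0] at hF0
  · right
    -- Closed neighbourhoods have at most three elements, so `n ≤ |W| + 3|F|` with `|F| = n - d`.
    have hWu : W ≠ Finset.univ := by
      intro e
      have := Finset.mem_univ f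
      rw [← e, hW, mem_outside] at this
      exact this.1 hf
    obtain ⟨b1, b2⟩ := proper_bound W hWu i hF0
    have b3 : (W ∪ W.image (· + 1)).card ≤ N + 3 := by
      simpa using Finset.card_le_univ (W ∪ W.image (· + 1))
    have b4 : (Finset.univ : Finset (Fin (N + 3))) ⊆
        W ∪ F.biUnion fun f => {f, f + 1, f - 1} := by
      intro x _
      rw [Finset.mem_union, Finset.mem_biUnion, or_iff_not_imp_right]
      intro hx
      push Not at hx
      rw [hW, mem_outside]
      refine ⟨fun hxF => hx x hxF (by simp), fun g hg e => hx g hg ?_⟩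
      rw [cycle_adj_succ] at e
      rcases e with rfl | rfl <;> simp
    have b5 := (Finset.card_le_card b4).trans (Finset.card_union_le _ _)
    have b6 := Finset.card_biUnion_le_card_mul F (fun f => ({f, f + 1, f - 1} : Finset _)) 3
      fun f _ => Finset.card_le_three
    rw [Finset.card_univ, Fintype.card_fin] at b5
    omega

theorem coverBetti_top (hn : 3 ≤ n) :
    coverBetti K (cycleGraph n) ((n + 1) / 3) n = if n % 3 = 0 then 2 else 1 := by
  have h0 : (∅ : Finset (Fin n)) ∈ indepCx (cycleGraph n) := by simp [mem_indepCx]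
  have : (indepCx (cycleGraph n)).filter (fun F => F.card + n = n) = {∅} := by
    ext F
    rw [Finset.mem_filter, Finset.mem_singleton]
    constructor
    · rintro ⟨-, h⟩
      exact Finset.card_eq_zero.1 (by omega)
    · rintro rfl
      exact ⟨h0, by simp⟩
  rw [coverBetti, this, Finset.sum_singleton, linkCx_indepCx h0]
  have e : outside (cycleGraph n) ∅ = Finset.univ := by simp [outside]
  rw [e]
  change hdim K _ _ = _
  rw [hdim_cycle hn, if_pos rfl]

theorem coverBetti_top_ne_zero (hn : 3 ≤ n) :
    coverBetti K (cycleGraph n) ((n + 1) / 3) n ≠ 0 := by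
  rw [coverBetti_top K hn]; split_ifs <;> simp

theorem projdimJ_cycle (hn : 3 ≤ n) : projdimJ K (cycleGraph n) = (n + 1) / 3 := by
  refine IsGreatest.csSup_eq ⟨⟨n, coverBetti_top_ne_zero K hn⟩, ?_⟩
  rintro i ⟨d, hd⟩
  rcases coverBetti_ne_zero K hn hd with h | h <;> omega

theorem regJ_cycle (hn : 3 ≤ n) : regJ K (cycleGraph n) = n - (n + 1) / 3 := by
  refine IsGreatest.csSup_eq ⟨⟨(n + 1) / 3, ?_⟩, ?_⟩
  · rw [show (n + 1) / 3 + (n - (n + 1) / 3) = n by omega]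
    exact coverBetti_top_ne_zero K hn
  · rintro j ⟨i, hi⟩
    rcases coverBetti_ne_zero K hn hi with h | h <;> omega

end Betti

/-- The highest graded Betti numbers of the vertex cover ideal of a cycle: for `n = 3k`,
`projdim J(C_n) = k`, `reg J(C_n) = 2k` and `β_{k,3k}(J(C_{3k})) = 2`; for `n = 3k + 1`,
`projdim = k`, `reg = 2k + 1` and `β_{k,3k+1}(J(C_{3k+1})) = 1`; for `n = 3k + 2`,
`projdim = k + 1`, `reg = 2k + 1` and `β_{k+1,3k+2}(J(C_{3k+2})) = 1`. -/
theorem cycle_coverIdeal_top_betti (k : ℕ) (hk : 1 ≤ k) :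
    (projdimJ K (cycleGraph (3 * k)) = k ∧ regJ K (cycleGraph (3 * k)) = 2 * k ∧
        coverBetti K (cycleGraph (3 * k)) k (3 * k) = 2) ∧
      (projdimJ K (cycleGraph (3 * k + 1)) = k ∧
        regJ K (cycleGraph (3 * k + 1)) = 2 * k + 1 ∧
        coverBetti K (cycleGraph (3 * k + 1)) k (3 * k + 1) = 1) ∧
      (projdimJ K (cycleGraph (3 * k + 2)) = k + 1 ∧
        regJ K (cycleGraph (3 * k + 2)) = 2 * k + 1 ∧
        coverBetti K (cycleGraph (3 * k + 2)) (k + 1) (3 * k + 2) = 1) := by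
  refine ⟨⟨?_, ?_, ?_⟩, ⟨?_, ?_, ?_⟩, ?_, ?_, ?_⟩
  · rw [projdimJ_cycle K (by omega)]; omega
  · rw [regJ_cycle K (by omega)]; omega
  · have h := coverBetti_top K (n := 3 * k) (by omega)
    rwa [show (3 * k + 1) / 3 = k by omega, if_pos (by omega)] at h
  · rw [projdimJ_cycle K (by omega)]; omega
  · rw [regJ_cycle K (by omega)]; omega
  · have h := coverBetti_top K (n := 3 * k + 1) (by omega)
    rwa [show (3 * k + 1 + 1) / 3 = k by omega, if_neg (by omega)] at h
  · rw [projdimJ_cycle K (by omega)]; omega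
  · rw [regJ_cycle K (by omega)]; omega
  · have h := coverBetti_top K (n := 3 * k + 2) (by omega)
    rwa [show (3 * k + 2 + 1) / 3 = k + 1 by omega, if_neg (by omega)] at h
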